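/- arXiv:1410.5937 — 2 statements merged into one kernel-verified Lean document; each statement's English description precedes it below -/
import Mathlib

section
/- Let L be a Lie algebra over a field F and let x ∈ L be extremal with associated linear form g_x, and assume in addition that g_x(x) = 0 and g_x([x,y]) = 0 for every y ∈ L. Then for all λ, μ ∈ F, exp(x,λ) ∘ exp(x,μ) = exp(x,λ+μ) as linear maps on L. In particular, {exp(x,λ) | λ ∈ F} is closed under composition and forms a group under composition, with exp(x,0) the identity. -/
/-!
Write `y' = exp(x,μ) y`. Since `g` vanishes on `x` and on every `[x,y]`, one has `g y' = g y`.
Since `[x,x] = 0` and `[x,[x,y]] = 2 g(y) x`, one has `[x,y'] = [x,y] + 2 μ g(y) x`. Hence the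
coefficient of `x` in `exp(x,λ) y'` is `(μ² + 2 λ μ + λ²) g(y) = (λ + μ)² g(y)`, and that of
`[x,y]` is `λ + μ`.
-/

/-- `x` is an extremal element of the Lie algebra `L` with associated linear
form `g_x`: for all `y, z ∈ L`, `[x,[x,y]] = 2·g_x(y)·x` and
`[[x,y],[x,z]] = g_x([y,z])·x + g_x(z)·[x,y] − g_x(y)·[x,z]`. -/
def IsExtremal {F : Type*} [Field F] {L : Type*} [LieRing L] [LieAlgebra F L]
    (x : L) (g : L →ₗ[F] F) : Prop :=
  (∀ y : L, ⁅x, ⁅x, y⁆⁆ = (2 * g y) • x) ∧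
  ∀ y z : L, ⁅⁅x, y⁆, ⁅x, z⁆⁆ = g ⁅y, z⁆ • x + g z • ⁅x, y⁆ - g y • ⁅x, z⁆

/-- The exponential map of an extremal element:
`exp(x,t) : y ↦ y + t·[x,y] + t²·g_x(y)·x`. -/
def extExp {F : Type*} [Field F] {L : Type*} [LieRing L] [LieAlgebra F L]
    (x : L) (g : L →ₗ[F] F) (t : F) : L → L :=
  fun y => y + t • ⁅x, y⁆ + (t ^ 2 * g y) • x

/-- If `x` is extremal with `g_x(x) = 0` and `g_x([x,y]) = 0` for all `y`, then
`exp(x,λ) ∘ exp(x,μ) = exp(x,λ+μ)`; in particular `{exp(x,λ) | λ ∈ F}` is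
closed under composition and is a group under composition, with `exp(x,0)` the
identity. -/
theorem statement17 {F : Type*} [Field F] {L : Type*} [LieRing L]
    [LieAlgebra F L] (x : L) (g : L →ₗ[F] F)
    (hx : IsExtremal x g) (hgx : g x = 0) (hgbr : ∀ y : L, g ⁅x, y⁆ = 0) :
    (∀ lam mu : F, extExp x g lam ∘ extExp x g mu = extExp x g (lam + mu)) ∧
    extExp x g 0 = id := by
  constructor
  · intro lam mu
    funext y
    have hg : g (extExp x g mu y) = g y := by simp [extExp, hgx, hgbr]
    have hb : ⁅x, extExp x g mu y⁆ = ⁅x, y⁆ + (mu * (2 * g y)) • x := by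
      simp [extExp, hx.1, smul_smul]
    -- The cross term `2 * lam * mu * g y` completes the square `(lam + mu) ^ 2 * g y`.
    calc extExp x g lam (extExp x g mu y)
        = extExp x g mu y + lam • ⁅x, extExp x g mu y⁆
            + (lam ^ 2 * g (extExp x g mu y)) • x := rfl
      _ = extExp x g (lam + mu) y := by
        rw [hg, hb]
        simp only [extExp]
        module
  · funext y
    simp [extExp]
end

section
/- Let L be a Lie algebra over a field F, let x ∈ L be extremal with associated linear form g_x, and let z ∈ L. Set y = [x,z] and assume [x,y] = 0, g_x(z) = 0 and g_x(y) = 0. Then for all λ, μ ∈ F, exp(x,μ)(λ·y + z) = (λ+μ)·y + z. In particular, the family of maps {exp(x,μ) | μ ∈ F} acts transitively on the set {λ·y + z | λ ∈ F}. -/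
/-- Let `x` be extremal, `z ∈ L`, `y = [x,z]`, and suppose `[x,y] = 0`,
`g_x(z) = 0` and `g_x(y) = 0`.  Then `exp(x,μ)(λ·y + z) = (λ+μ)·y + z` for all
`λ, μ ∈ F`; in particular `{exp(x,μ) | μ ∈ F}` acts transitively on
`{λ·y + z | λ ∈ F}`. -/
theorem statement18 {F : Type*} [Field F] {L : Type*} [LieRing L]
    [LieAlgebra F L] (x : L) (g : L →ₗ[F] F) (hx : IsExtremal x g)
    (z y : L) (hy : y = ⁅x, z⁆) (hbr : ⁅x, y⁆ = 0)
    (hgz : g z = 0) (hgy : g y = 0) :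
    (∀ lam mu : F, extExp x g mu (lam • y + z) = (lam + mu) • y + z) ∧
    ∀ v w : L, (∃ lam : F, v = lam • y + z) → (∃ lam : F, w = lam • y + z) →
      ∃ mu : F, extExp x g mu v = w := by
  have key : ∀ lam mu : F, extExp x g mu (lam • y + z) = (lam + mu) • y + z := by
    intro lam mu
    have hg : g (lam • y + z) = 0 := by simp [hgy, hgz]
    have hb : ⁅x, lam • y + z⁆ = y := by rw [lie_add, lie_smul, hbr, ← hy, smul_zero, zero_add]
    simp only [extExp, hg, hb, mul_zero, zero_smul, add_zero]
    module
  refine ⟨key, ?_⟩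
  rintro v w ⟨a, rfl⟩ ⟨b, rfl⟩
  exact ⟨b - a, by rw [key, add_sub_cancel]⟩
end
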